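/- For any MDP M given by a symbolic description and any well-labeled finished PASG P for M with root n₀ labeled by the initial valuation, the maximal probability of reaching a target node in the MDP induced by P is at least as high as the maximal probability of reaching a target state in M. -/

import Mathlib

/-!
The optimal reachability values of any MDP satisfy one half of the Bellman equation: outside the
target set, the value of a state is at least the expected value after any enabled action, because a
strategy may be chosen separately for each successor. Conversely, every function that is at least
`1` on the target set and does not increase in expectation outside it bounds the reachability
probability of every strategy.

Call a state `s` and a node `n` related if `s` lies in the concretization of the abstract label of
`n`, and apply the second fact in the symbolic MDP to the infimum, over all nodes related to `s`, of
their values in the graph. Related states and nodes agree on the guards (A2), a covered node is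
worth at least its covering node, which is related to the same states (C2) and not covered (C3), and
at an uncovered node each assignment `a` of a command leads to a node related to `a s` (B2), so the
first fact, used in the graph, gives the required inequality.
-/

open scoped ENNReal

/-- A Markov decision process with state space `S` and action set `A`:
`P s a s'` is the transition probability. For the MDPs considered here, for every
`s, a` the total mass `∑' s', P s a s'` is `1` (the action is enabled) or `0`. -/
structure MDP (S : Type*) (A : Type*) where
  P : S → A → S → ℝ≥0∞
  init : S

namespace MDP

variable {S A : Type*}

/-- An action is enabled in a state iff its outgoing probabilities sum to one. -/
def Enabled (M : MDP S A) (s : S) (a : A) : Prop :=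
  (∑' s', M.P s a s') = 1

/-- The last state of a history (a list of action/state steps), given the start state. -/
def lastSt (s : S) (h : List (A × S)) : S :=
  ((h.getLast?).map Prod.snd).getD s

open Classical in
/-- Probability of a finite path (a list of action/state steps) from state `s` with
accumulated history `h`, under the (history-dependent) strategy `σ`. -/
noncomputable def pathProb (M : MDP S A) (σ : List (A × S) → A) :
    S → List (A × S) → List (A × S) → ℝ≥0∞
  | _, _, [] => 1
  | s, h, (a, s') :: rest =>
      (if σ h = a then M.P s a s' else 0) * pathProb M σ s' (h ++ [(a, s')]) rest

/-- The path visits the target set `E` exactly at its final state and never before. -/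
def FirstHit (E : Set S) : S → List (A × S) → Prop
  | s, [] => s ∈ E
  | s, (_, s') :: rest => s ∉ E ∧ FirstHit E s' rest

/-- A finite trace: every step has positive probability. -/
def IsTrace (M : MDP S A) : S → List (A × S) → Prop
  | _, [] => True
  | s, (a, s') :: rest => 0 < M.P s a s' ∧ IsTrace M s' rest

/-- A strategy is valid from `s₀` if it always chooses an enabled action
whenever some action is enabled in the current state. -/
def ValidFrom (M : MDP S A) (s₀ : S) (σ : List (A × S) → A) : Prop :=
  ∀ h : List (A × S), (∃ a, M.Enabled (lastSt s₀ h) a) → M.Enabled (lastSt s₀ h) (σ h)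

/-- Probability of reaching `E` from `s₀` under strategy `σ`: the total mass of the
(pairwise incompatible) first-hitting paths. -/
noncomputable def reachProbFrom (M : MDP S A) (σ : List (A × S) → A) (s₀ : S)
    (E : Set S) : ℝ≥0∞ :=
  ∑' l : {l : List (A × S) // FirstHit E s₀ l}, pathProb M σ s₀ [] l.1

/-- Maximal probability of reaching `E` from `s`. -/
noncomputable def PmaxFrom (M : MDP S A) (E : Set S) (s : S) : ℝ≥0∞ :=
  ⨆ σ : {σ : List (A × S) → A // ValidFrom M s σ}, reachProbFrom M σ.1 s E

/-- Maximal probability of reaching `E` from the initial state. -/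
noncomputable def Pmax (M : MDP S A) (E : Set S) : ℝ≥0∞ :=
  PmaxFrom M E M.init

/-- Minimal probability of reaching `E` from `s`. -/
noncomputable def PminFrom (M : MDP S A) (E : Set S) (s : S) : ℝ≥0∞ :=
  ⨅ σ : {σ : List (A × S) → A // ValidFrom M s σ}, reachProbFrom M σ.1 s E

/-- Minimal probability of reaching `E` from the initial state. -/
noncomputable def Pmin (M : MDP S A) (E : Set S) : ℝ≥0∞ :=
  PminFrom M E M.init

end MDP

/-- A symbolic MDP over states `Val` (valuations of the variables): a set of commands,
each with a guard and a finite-support distribution over assignments (semantically,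
state transformers `Val → Val`), and an initial valuation. -/
structure SymMDP (Val : Type*) (Cmd : Type*) where
  guard : Cmd → Val → Prop
  dist : Cmd → PMF (Val → Val)
  finSupp : ∀ c, (dist c).support.Finite
  init : Val

open Classical in
/-- The MDP induced by a symbolic MDP: command `c` is enabled in `s` iff its guard
holds, and then the next-state distribution is the pushforward of `dist c` under
evaluation at `s`. -/
noncomputable def SymMDP.toMDP {Val Cmd : Type*} (M : SymMDP Val Cmd) : MDP Val Cmd where
  P := fun s c s' => if M.guard c s then ((M.dist c).map fun a => a s) s' else 0
  init := M.init

/-- Three-valued truth values for evaluating Boolean expressions on abstract states. -/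
inductive TV
  | tt
  | ff
  | uk

/-- An abstract domain over the concrete state set `Val`, with partially ordered
abstract states `AS`, abstraction `abstr`, concretization `conc`, and the Galois
condition `abstr A ≤ b ↔ A ⊆ conc b`. -/
structure AbsDom (Val : Type*) (AS : Type*) [PartialOrder AS] where
  abstr : Set Val → AS
  conc : AS → Set Val
  galois : ∀ (A : Set Val) (b : AS), abstr A ≤ b ↔ A ⊆ conc b

namespace AbsDom

variable {Val AS : Type*} [PartialOrder AS]

open Classical in
/-- Three-valued evaluation of a Boolean expression `b` on an abstract state:
`tt` if it holds in all concretizations, `ff` if in none, `uk` otherwise. -/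
noncomputable def beval (D : AbsDom Val AS) (b : Val → Prop) (x : AS) : TV :=
  if ∀ s ∈ D.conc x, b s then TV.tt
  else if ∀ s ∈ D.conc x, ¬ b s then TV.ff
  else TV.uk

/-- The abstract post operator: `post a x = abstr (a '' conc x)`. -/
def post (D : AbsDom Val AS) (a : Val → Val) (x : AS) : AS :=
  D.abstr (a '' D.conc x)

end AbsDom

open Classical in
/-- Two-valued evaluation of a Boolean expression in a concrete state, as a `TV`. -/
noncomputable def cevalTV {Val : Type*} (b : Val → Prop) (s : Val) : TV :=
  if b s then TV.tt else TV.ff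

/-- A probabilistic adaptive simulation graph (PASG). A transition edge `(n, c, f) ∈ ET`
goes from node `n` via command `c`; `f` matches each assignment in the support of `c`'s
distribution with its result node (thereby inducing the node distribution of the edge as
the pushforward of the assignment distribution). `EC n = some n'` means node `n` is
covered by its covering node `n'`; `Lc`/`La` are the concrete/abstract labelings. -/
structure PASG (Val AS Cmd Node : Type*) where
  ET : Set (Node × Cmd × ((Val → Val) → Node))
  EC : Node → Option Node
  Lc : Node → Val
  La : Node → AS

namespace PASG

variable {Val AS Cmd Node : Type*} [PartialOrder AS]

/-- A node is covered iff it has an outgoing covering edge. -/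
def Covered (P : PASG Val AS Cmd Node) (n : Node) : Prop := P.EC n ≠ none

/-- A node is expanded iff every command enabled in its concrete label has a
transition edge. -/
def Expanded (M : SymMDP Val Cmd) (P : PASG Val AS Cmd Node) (n : Node) : Prop :=
  ∀ c, M.guard c (P.Lc n) → ∃ f, (n, c, f) ∈ P.ET

/-- A PASG is finished iff every node is covered or expanded. -/
def Finished (M : SymMDP Val Cmd) (P : PASG Val AS Cmd Node) : Prop :=
  ∀ n, P.Covered n ∨ P.Expanded M n

/-- The well-labeledness constraints A1, A2, B1, B2, C1, C2, C3, D1. -/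
structure WellLabeled (M : SymMDP Val Cmd) (D : AbsDom Val AS)
    (P : PASG Val AS Cmd Node) : Prop where
  /-- A1: the abstract label contains the concrete label. -/
  A1 : ∀ n, P.Lc n ∈ D.conc (P.La n)
  /-- A2: the concrete label exactly represents the abstract label w.r.t. enabledness. -/
  A2 : ∀ n c, D.beval (M.guard c) (P.La n) = cevalTV (M.guard c) (P.Lc n)
  /-- B1: the command of a transition edge is enabled in the concrete label of its source. -/
  B1 : ∀ e ∈ P.ET, M.guard e.2.1 (P.Lc e.1)
  /-- B2 (probabilities): result nodes of distinct assignments are distinct, hence the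
  induced node distribution gives each result node exactly the assignment's probability. -/
  B2inj : ∀ e ∈ P.ET, Set.InjOn e.2.2 (M.dist e.2.1).support
  /-- B2 (concrete labels): the concrete label of a result node is the result of the
  corresponding assignment. -/
  B2c : ∀ e ∈ P.ET, ∀ a ∈ (M.dist e.2.1).support, P.Lc (e.2.2 a) = a (P.Lc e.1)
  /-- B2 (abstract labels): the abstract label of a result node overapproximates the
  abstract post of the source. -/
  B2a : ∀ e ∈ P.ET, ∀ a ∈ (M.dist e.2.1).support, D.post a (P.La e.1) ≤ P.La (e.2.2 a)
  /-- C1: the abstract label of the covering node contains the concrete label of the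
  covered node. -/
  C1 : ∀ n n', P.EC n = some n' → P.Lc n ∈ D.conc (P.La n')
  /-- C2: the covering node is at least as abstract as the covered node. -/
  C2 : ∀ n n', P.EC n = some n' → P.La n ≤ P.La n'
  /-- C3: a covering node is not itself covered. -/
  C3 : ∀ n n', P.EC n = some n' → P.EC n' = none
  /-- D1: at most one node with a given concrete label is non-covered. -/
  D1 : ∀ n n', n ≠ n' → P.Lc n = P.Lc n' → P.Covered n ∨ P.Covered n'

open Classical in
/-- The MDP induced by a finished PASG with root `n₀`: in a non-covered node a command
is enabled iff it has a transition edge (with the induced node distribution); a covered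
node has only the extra `cover` action (`Sum.inr ()`), leading with probability `1` to
its covering node. -/
noncomputable def toMDP (M : SymMDP Val Cmd) (P : PASG Val AS Cmd Node) (n₀ : Node) :
    MDP Node (Cmd ⊕ Unit) where
  init := n₀
  P := fun n act m =>
    match act with
    | Sum.inl c =>
        if h : P.EC n = none ∧ ∃ f, (n, c, f) ∈ P.ET then ((M.dist c).map h.2.choose) m
        else 0
    | Sum.inr _ =>
        match P.EC n with
        | some n' => if m = n' then 1 else 0
        | none => 0

end PASG

open Classical in
lemma tsum_iSup_eq_iSup_tsum_pi {α : Type*} {ι : α → Type*} [∀ a, Nonempty (ι a)]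
    (f : ∀ a, ι a → ℝ≥0∞) : ∑' a, ⨆ i, f a i = ⨆ T : ∀ a, ι a, ∑' a, f a (T a) := by
  have iSup_eval (a : α) : ⨆ i, f a i = ⨆ T : ∀ a, ι a, f a (T a) :=
    ((Function.surjective_eval a).iSup_comp _).symm
  have directed (T U : ∀ a, ι a) :
      ∃ V : ∀ a, ι a, ∀ a, f a (T a) ≤ f a (V a) ∧ f a (U a) ≤ f a (V a) := by
    refine ⟨fun a => if f a (T a) ≤ f a (U a) then U a else T a, fun a => ?_⟩
    dsimp only
    split_ifs with h
    · exact ⟨h, le_rfl⟩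
    · exact ⟨le_rfl, (not_le.1 h).le⟩
  simp only [iSup_eval, ENNReal.tsum_eq_iSup_sum, ENNReal.finsetSum_iSup directed]
  exact iSup_comm

lemma tsum_list_eq_nil_add_tsum_cons {α : Type*} (f : List α → ℝ≥0∞) :
    ∑' l, f l = f [] + ∑' p : α, ∑' l, f (p :: l) := by
  let e : Unit ⊕ (α × List α) ≃ List α :=
    { toFun := Sum.elim (fun _ => []) (fun p => p.1 :: p.2)
      invFun := fun
        | [] => Sum.inl ()
        | a :: l => Sum.inr (a, l)
      left_inv := by rintro (_ | ⟨a, l⟩) <;> rfl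
      right_inv := by rintro (_ | ⟨a, l⟩) <;> rfl }
  rw [← e.tsum_eq f, Summable.tsum_sum ENNReal.summable ENNReal.summable, ENNReal.tsum_prod',
    tsum_fintype]
  simp [e]

lemma tsum_pmf_map_mul {α β : Type*} (p : PMF α) (g : α → β) (F : β → ℝ≥0∞) :
    ∑' b, p.map g b * F b = ∑' a, p a * F (g a) := by
  classical
  simp only [PMF.map_apply, ← ENNReal.tsum_mul_right]
  rw [ENNReal.tsum_comm]
  refine tsum_congr fun a => ?_
  rw [tsum_eq_single (g a) fun b hb => by simp [hb], if_pos rfl]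

namespace MDP

variable {S A : Type*}

/-- The strategy that `σ` prescribes once the first step `p` has been taken, as a function of the
history after that step. -/
def residual (σ : List (A × S) → A) (p : A × S) : List (A × S) → A :=
  fun h => σ (p :: h)

/-- The strategy that plays `a` first and then follows the strategy that `T` assigns to the state
reached by this step. -/
def firstThen (a : A) (T : S → List (A × S) → A) : List (A × S) → A
  | [] => a
  | p :: h => T p.2 h

/-- The total probability of a set `L` of finite paths from `s` under `σ`. It is the probability
that some path in `L` is followed if no path in `L` is a proper prefix of another one, as is the
case for first-hitting paths. -/
noncomputable def pathMass (M : MDP S A) (σ : List (A × S) → A) (s : S)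
    (L : Set (List (A × S))) : ℝ≥0∞ :=
  ∑' l : L, pathProb M σ s [] l

section PathMass

variable (M : MDP S A) (σ : List (A × S) → A) (s : S)

@[simp]
lemma pathMass_empty : pathMass M σ s ∅ = 0 := tsum_empty

lemma pathProb_cons_history (p : A × S) (h l : List (A × S)) :
    pathProb M σ s (p :: h) l = pathProb M (residual σ p) s h l := by
  induction l generalizing s h with
  | nil => rfl
  | cons q l ih =>
    simp only [pathProb, List.cons_append, ih]
    rfl

open Classical in
lemma pathProb_cons (a : A) (s' : S) (l : List (A × S)) :
    pathProb M σ s [] ((a, s') :: l) =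
      (if σ [] = a then M.P s a s' else 0) * pathProb M (residual σ (a, s')) s' [] l := by
  simp only [pathProb, List.nil_append, pathProb_cons_history]

open Classical in
lemma pathMass_eq_add_tsum (L : Set (List (A × S))) :
    pathMass M σ s L = (if [] ∈ L then 1 else 0) +
      ∑' s', M.P s (σ []) s' *
        pathMass M (residual σ (σ [], s')) s' {l | (σ [], s') :: l ∈ L} := by
  simp only [pathMass, tsum_subtype _ (pathProb M _ _ [])]
  rw [tsum_list_eq_nil_add_tsum_cons, ENNReal.tsum_prod', tsum_eq_single (σ [])]
  · have nil_term : pathProb M σ s [] [] = 1 := rfl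
    simp only [Set.indicator_apply, nil_term, pathProb_cons, if_true, Set.mem_ofPred_eq,
      ← ENNReal.tsum_mul_left, mul_ite, mul_zero]
  · intro a ha
    simp [Set.indicator_apply, pathProb_cons, Ne.symm ha]

variable {s} {E : Set S}

lemma reachProbFrom_eq_pathMass :
    reachProbFrom M σ s E = pathMass M σ s {l | FirstHit E s l} := rfl

lemma reachProbFrom_of_mem (hs : s ∈ E) : reachProbFrom M σ s E = 1 := by
  simp [reachProbFrom_eq_pathMass, pathMass_eq_add_tsum M σ s, FirstHit, hs]

lemma reachProbFrom_of_notMem (hs : s ∉ E) :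
    reachProbFrom M σ s E =
      ∑' s', M.P s (σ []) s' * reachProbFrom M (residual σ (σ [], s')) s' E := by
  simp [reachProbFrom_eq_pathMass, pathMass_eq_add_tsum M σ s, FirstHit, hs]

lemma reachProbFrom_le_of_forall_pathMass_length_le {b : ℝ≥0∞}
    (hb : ∀ k, pathMass M σ s {l | FirstHit E s l ∧ l.length ≤ k} ≤ b) :
    reachProbFrom M σ s E ≤ b := by
  classical
  rw [reachProbFrom_eq_pathMass, pathMass, tsum_subtype _ (pathProb M σ s [])]
  refine ENNReal.summable.tsum_le_of_sum_le fun L => ?_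
  obtain ⟨k, length_le⟩ : ∃ k, ∀ l ∈ L, l.length ≤ k := ⟨L.sup List.length, fun _ => Finset.le_sup⟩
  calc ∑ l ∈ L, {l | FirstHit E s l}.indicator (pathProb M σ s []) l
      = ∑ l ∈ L, {l | FirstHit E s l ∧ l.length ≤ k}.indicator (pathProb M σ s []) l :=
        Finset.sum_congr rfl fun l hl => by
          simp only [Set.indicator_apply, Set.mem_ofPred_eq, length_le l hl, and_true]
    _ ≤ ∑' l, {l | FirstHit E s l ∧ l.length ≤ k}.indicator (pathProb M σ s []) l :=
        ENNReal.sum_le_tsum L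
    _ = pathMass M σ s {l | FirstHit E s l ∧ l.length ≤ k} := (tsum_subtype _ _).symm
    _ ≤ b := hb k

end PathMass

/-- `F` dominates the indicator function of `E` and is superharmonic outside `E`. The inequality is
required for disabled actions too, because a strategy must choose some action even where none is
enabled. -/
structure IsSuperharmonicMajorant (M : MDP S A) (E : Set S) (F : S → ℝ≥0∞) : Prop where
  one_le : ∀ s ∈ E, 1 ≤ F s
  tsum_mul_le : ∀ s ∉ E, ∀ a, ∑' s', M.P s a s' * F s' ≤ F s

namespace IsSuperharmonicMajorant

variable {M : MDP S A} {E : Set S} {F : S → ℝ≥0∞}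

lemma pathMass_length_le_le (hF : IsSuperharmonicMajorant M E F) (k : ℕ) (σ : List (A × S) → A)
    (s : S) : pathMass M σ s {l | FirstHit E s l ∧ l.length ≤ k} ≤ F s := by
  induction k generalizing σ s with
  | zero =>
    by_cases hs : s ∈ E
    · simpa [pathMass_eq_add_tsum M σ s, FirstHit, hs] using hF.one_le s hs
    · simp [pathMass_eq_add_tsum M σ s, FirstHit, hs]
  | succ k ih =>
    by_cases hs : s ∈ E
    · simpa [pathMass_eq_add_tsum M σ s, FirstHit, hs] using hF.one_le s hs
    · calc pathMass M σ s {l | FirstHit E s l ∧ l.length ≤ k + 1}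
          = ∑' s', M.P s (σ []) s' *
              pathMass M (residual σ (σ [], s')) s' {l | FirstHit E s' l ∧ l.length ≤ k} := by
            simp [pathMass_eq_add_tsum M σ s, FirstHit, hs]
        _ ≤ ∑' s', M.P s (σ []) s' * F s' :=
            ENNReal.tsum_le_tsum fun s' => mul_le_mul_right (ih _ s') _
        _ ≤ F s := hF.tsum_mul_le s hs _

lemma PmaxFrom_le (hF : IsSuperharmonicMajorant M E F) (s : S) : PmaxFrom M E s ≤ F s :=
  iSup_le fun σ => reachProbFrom_le_of_forall_pathMass_length_le M σ.1
    fun k => hF.pathMass_length_le_le k σ.1 s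

end IsSuperharmonicMajorant

section Bellman

variable (M : MDP S A)

instance instNonemptyValidFrom [Nonempty A] (s : S) : Nonempty {σ // ValidFrom M s σ} := by
  have choice (h : List (A × S)) :
      ∃ a, (∃ b, M.Enabled (lastSt s h) b) → M.Enabled (lastSt s h) a := by
    by_cases H : ∃ b, M.Enabled (lastSt s h) b
    · exact H.imp fun _ hb _ => hb
    · exact ⟨Classical.arbitrary A, fun H' => absurd H' H⟩
  choose σ hσ using choice
  exact ⟨σ, hσ⟩

lemma PmaxFrom_of_mem [Nonempty A] {E : Set S} {s : S} (hs : s ∈ E) : PmaxFrom M E s = 1 := by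
  simp only [PmaxFrom, reachProbFrom_of_mem M _ hs, ciSup_const]

lemma lastSt_cons (s : S) (p : A × S) (h : List (A × S)) : lastSt s (p :: h) = lastSt p.2 h := by
  cases h using List.reverseRecOn with
  | nil => rfl
  | append_singleton l q => simp [lastSt, List.getLast?_cons]

variable {M} in
lemma ValidFrom.firstThen {s : S} {a : A} (ha : M.Enabled s a) {T : S → List (A × S) → A}
    (hT : ∀ s', ValidFrom M s' (T s')) : ValidFrom M s (firstThen a T)
  | [], _ => ha
  | p :: h, H => by
    rw [lastSt_cons] at H ⊢
    exact hT p.2 h H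

lemma tsum_mul_PmaxFrom_le {E : Set S} {s : S} (hs : s ∉ E) {a : A} (ha : M.Enabled s a) :
    ∑' s', M.P s a s' * PmaxFrom M E s' ≤ PmaxFrom M E s := by
  have : Nonempty A := ⟨a⟩
  simp only [PmaxFrom, ENNReal.mul_iSup]
  rw [tsum_iSup_eq_iSup_tsum_pi]
  refine iSup_le fun T => ?_
  let τ := firstThen a fun s' => (T s').1
  calc ∑' s', M.P s a s' * reachProbFrom M (T s').1 s' E
      = reachProbFrom M τ s E := (reachProbFrom_of_notMem M τ hs).symm
    _ ≤ PmaxFrom M E s :=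
      le_iSup (fun σ : {σ // ValidFrom M s σ} => reachProbFrom M σ.1 s E)
        ⟨τ, .firstThen ha fun s' => (T s').2⟩

end Bellman

end MDP

lemma SymMDP.tsum_toMDP_mul {Val Cmd : Type*} (M : SymMDP Val Cmd) {c : Cmd} {s : Val}
    (hc : M.guard c s) (F : Val → ℝ≥0∞) :
    ∑' s', M.toMDP.P s c s' * F s' = ∑' a, M.dist c a * F (a s) := by
  simp only [toMDP, if_pos hc, tsum_pmf_map_mul]

namespace AbsDom

variable {Val AS : Type*} [PartialOrder AS] (D : AbsDom Val AS) {x y : AS}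

lemma conc_mono (h : x ≤ y) : D.conc x ⊆ D.conc y :=
  (D.galois _ _).1 (((D.galois _ _).2 subset_rfl).trans h)

lemma mem_conc_of_post_le {a : Val → Val} (h : D.post a x ≤ y) {s : Val} (hs : s ∈ D.conc x) :
    a s ∈ D.conc y :=
  (D.galois _ _).1 h (Set.mem_image_of_mem a hs)

lemma iff_of_beval_eq_cevalTV {b : Val → Prop} {s t : Val} (h : D.beval b x = cevalTV b t)
    (hs : s ∈ D.conc x) : b s ↔ b t := by
  unfold beval cevalTV at h
  split_ifs at h with h_all ht h_none ht
  · exact iff_of_true (h_all s hs) ht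
  · exact iff_of_false (h_none s hs) ht

end AbsDom

namespace PASG

variable {Val AS Cmd Node : Type*} (M : SymMDP Val Cmd) (P : PASG Val AS Cmd Node) (n₀ : Node)

lemma PmaxFrom_coveringNode_le {E : Set Node} {n n' : Node} (hn : P.EC n = some n')
    (hnE : n ∉ E) :
    MDP.PmaxFrom (toMDP M P n₀) E n' ≤ MDP.PmaxFrom (toMDP M P n₀) E n := by
  classical
  have cover_prob (m : Node) :
      (toMDP M P n₀).P n (.inr ()) m = if m = n' then 1 else 0 := by
    simp [toMDP, hn]
  have cover_enabled : (toMDP M P n₀).Enabled n (.inr ()) := by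
    simp [MDP.Enabled, cover_prob]
  simpa [cover_prob] using MDP.tsum_mul_PmaxFrom_le (toMDP M P n₀) hnE cover_enabled

lemma exists_edge_tsum_mul_PmaxFrom_le {E : Set Node} {n : Node} (hn : P.EC n = none)
    (hnE : n ∉ E) {c : Cmd} (hc : ∃ f, (n, c, f) ∈ P.ET) :
    ∃ f, (n, c, f) ∈ P.ET ∧
      ∑' a, M.dist c a * MDP.PmaxFrom (toMDP M P n₀) E (f a) ≤
        MDP.PmaxFrom (toMDP M P n₀) E n := by
  have edge_prob (m : Node) :
      (toMDP M P n₀).P n (.inl c) m = (M.dist c).map hc.choose m := by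
    simp [toMDP, hn, hc]
  have edge_enabled : (toMDP M P n₀).Enabled n (.inl c) := by
    simp only [MDP.Enabled, edge_prob, PMF.tsum_coe]
  refine ⟨hc.choose, hc.choose_spec, ?_⟩
  simpa only [edge_prob, tsum_pmf_map_mul] using
    MDP.tsum_mul_PmaxFrom_le (toMDP M P n₀) hnE edge_enabled

variable [PartialOrder AS] (D : AbsDom Val AS)

/-- The least value in the graph of a node whose abstract label represents `s`; it is `⊤` if there
is no such node. -/
noncomputable def infPmaxFrom (E : Set Node) (s : Val) : ℝ≥0∞ :=
  ⨅ n : {n // s ∈ D.conc (P.La n)}, MDP.PmaxFrom (toMDP M P n₀) E n.1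

variable {M P D}

lemma infPmaxFrom_le {E : Set Node} {s : Val} {n : Node} (hs : s ∈ D.conc (P.La n)) :
    infPmaxFrom M P n₀ D E s ≤ MDP.PmaxFrom (toMDP M P n₀) E n :=
  iInf_le (fun n : {n // s ∈ D.conc (P.La n)} => MDP.PmaxFrom (toMDP M P n₀) E n.1) ⟨n, hs⟩

lemma tsum_mul_infPmaxFrom_le_of_edge
    (hpost : ∀ e ∈ P.ET, ∀ a ∈ (M.dist e.2.1).support, D.post a (P.La e.1) ≤ P.La (e.2.2 a))
    {E : Set Node} {n : Node} (hn : P.EC n = none) (hnE : n ∉ E) {c : Cmd}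
    (hc : ∃ f, (n, c, f) ∈ P.ET) {s : Val} (hs : s ∈ D.conc (P.La n)) :
    ∑' a, M.dist c a * infPmaxFrom M P n₀ D E (a s) ≤ MDP.PmaxFrom (toMDP M P n₀) E n := by
  obtain ⟨f, hf, hf_le⟩ := exists_edge_tsum_mul_PmaxFrom_le M P n₀ hn hnE hc
  refine le_trans (ENNReal.tsum_le_tsum fun a => ?_) hf_le
  by_cases ha : a ∈ (M.dist c).support
  · have successor_related : a s ∈ D.conc (P.La (f a)) :=
      D.mem_conc_of_post_le (hpost _ hf a ha) hs
    exact mul_le_mul_right (infPmaxFrom_le n₀ successor_related) _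
  · simp [(PMF.apply_eq_zero_iff _ _).2 ha]

lemma exists_uncovered_PmaxFrom_le
    (hcover : ∀ n n', P.EC n = some n' → P.La n ≤ P.La n')
    (huncovered : ∀ n n', P.EC n = some n' → P.EC n' = none)
    {E : Set Node} {n : Node} (hnE : n ∉ E) {s : Val} (hs : s ∈ D.conc (P.La n)) :
    ∃ m, P.EC m = none ∧ s ∈ D.conc (P.La m) ∧
      MDP.PmaxFrom (toMDP M P n₀) E m ≤ MDP.PmaxFrom (toMDP M P n₀) E n := by
  cases hn : P.EC n with
  | none => exact ⟨n, hn, hs, le_rfl⟩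
  | some n' =>
    exact ⟨n', huncovered n n' hn, D.conc_mono (hcover n n' hn) hs,
      PmaxFrom_coveringNode_le M P n₀ hn hnE⟩

lemma isSuperharmonicMajorant_infPmaxFrom
    (hguard : ∀ n c, ∀ s ∈ D.conc (P.La n), M.guard c s → M.guard c (P.Lc n))
    (hpost : ∀ e ∈ P.ET, ∀ a ∈ (M.dist e.2.1).support, D.post a (P.La e.1) ≤ P.La (e.2.2 a))
    (hcover : ∀ n n', P.EC n = some n' → P.La n ≤ P.La n')
    (huncovered : ∀ n n', P.EC n = some n' → P.EC n' = none) (hfin : Finished M P)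
    {E : Set Val} {E' : Set Node} (hE : ∀ n, ∀ s ∈ D.conc (P.La n), s ∈ E ↔ n ∈ E') :
    MDP.IsSuperharmonicMajorant M.toMDP E (infPmaxFrom M P n₀ D E') where
  one_le s hs := le_iInf fun n => by
    rw [MDP.PmaxFrom_of_mem _ ((hE n.1 s n.2).1 hs)]
  tsum_mul_le s hs c := by
    by_cases hc : M.guard c s
    swap
    · simp [SymMDP.toMDP, hc]
    refine le_iInf fun ⟨n, hsn⟩ => ?_
    have hnE : n ∉ E' := fun hn => hs ((hE n s hsn).2 hn)
    obtain ⟨m, hm, hsm, hm_le⟩ := exists_uncovered_PmaxFrom_le n₀ hcover huncovered hnE hsn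
    have hmE : m ∉ E' := fun hm => hs ((hE m s hsm).2 hm)
    have edge : ∃ f, (m, c, f) ∈ P.ET :=
      (hfin m).resolve_left (not_not.2 hm) c (hguard m c s hsm hc)
    rw [M.tsum_toMDP_mul hc]
    exact (tsum_mul_infPmaxFrom_le_of_edge n₀ hpost hm hmE edge hsm).trans hm_le

end PASG

theorem pasg_upper_soundness_general {Val AS Cmd Node : Type*} [PartialOrder AS]
    (M : SymMDP Val Cmd) (D : AbsDom Val AS) (P : PASG Val AS Cmd Node)
    (hguard : ∀ n c, ∀ s ∈ D.conc (P.La n), M.guard c s → M.guard c (P.Lc n))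
    (hpost : ∀ e ∈ P.ET, ∀ a ∈ (M.dist e.2.1).support, D.post a (P.La e.1) ≤ P.La (e.2.2 a))
    (hcover : ∀ n n', P.EC n = some n' → P.La n ≤ P.La n')
    (huncovered : ∀ n n', P.EC n = some n' → P.EC n' = none) (hfin : PASG.Finished M P)
    {E : Set Val} {E' : Set Node} (hE : ∀ n, ∀ s ∈ D.conc (P.La n), s ∈ E ↔ n ∈ E')
    {n₀ : Node} (hroot : M.init ∈ D.conc (P.La n₀)) :
    MDP.Pmax M.toMDP E ≤ MDP.Pmax (PASG.toMDP M P n₀) E' :=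
  calc MDP.PmaxFrom M.toMDP E M.init
      ≤ PASG.infPmaxFrom M P n₀ D E' M.init :=
        (PASG.isSuperharmonicMajorant_infPmaxFrom n₀ hguard hpost hcover huncovered hfin
          hE).PmaxFrom_le M.init
    _ ≤ MDP.PmaxFrom (PASG.toMDP M P n₀) E' n₀ := PASG.infPmaxFrom_le n₀ hroot

/-- The maximal probability of reaching a target node in the MDP
induced by a well-labeled finished PASG `P` for `M` (rooted at `n₀`, labeled by the
initial valuation) is at least the maximal probability of reaching a target state
in `M`. -/
theorem pasg_upper_soundness {Val AS Cmd Node : Type*} [PartialOrder AS] [Finite Cmd]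
    (M : SymMDP Val Cmd) (D : AbsDom Val AS) (P : PASG Val AS Cmd Node)
    (φ : Val → Prop) (tc : Cmd)
    (htcg : ∀ s, M.guard tc s ↔ φ s) (htcd : M.dist tc = PMF.pure id)
    (hwl : PASG.WellLabeled M D P) (hfin : PASG.Finished M P)
    (n₀ : Node) (hroot : P.Lc n₀ = M.init) :
    MDP.Pmax M.toMDP {s | M.guard tc s} ≤
      MDP.Pmax (PASG.toMDP M P n₀) {n | M.guard tc (P.Lc n)} :=
  pasg_upper_soundness_general M D P
    (fun _ c _ hs => (D.iff_of_beval_eq_cevalTV (hwl.A2 _ c) hs).1) hwl.B2a hwl.C2 hwl.C3 hfin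
    (fun _ _ hs => D.iff_of_beval_eq_cevalTV (hwl.A2 _ tc) hs) (hroot ▸ hwl.A1 n₀)
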